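/- If τ is a full-rank density matrix on a finite-dimensional Hilbert space and P_k is, for each k, a pinching channel on the k-fold tensor product fixing τ^{⊗k} and using at most poly(k) projectors (e.g., at most (k+1)^{c} projectors for a constant c), then limsup_{k→∞} (1/k) D(P_k(ρ^{⊗k}) ‖ τ^{⊗k}) = D(ρ‖τ) for every density matrix ρ with supp(ρ) ⊆ supp(τ). -/

import Mathlib

open Matrix
open scoped ComplexOrder

/-- Matrix logarithm of a Hermitian matrix via its spectral decomposition, with the
convention `log 0 = 0` (i.e. the logarithm is taken on the support). -/
noncomputable def matLog {ι : Type*} [Fintype ι] [DecidableEq ι]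
    (A : Matrix ι ι ℂ) : Matrix ι ι ℂ :=
  if hA : A.IsHermitian then
    (hA.eigenvectorUnitary : Matrix ι ι ℂ) *
      Matrix.diagonal (fun i => (Real.log (hA.eigenvalues i) : ℂ)) *
      (hA.eigenvectorUnitary : Matrix ι ι ℂ)ᴴ
  else 0

/-- Umegaki relative entropy `D(ρ‖σ) = Tr[ρ log ρ − ρ log σ]`. -/
noncomputable def relEnt {ι : Type*} [Fintype ι] [DecidableEq ι]
    (ρ σ : Matrix ι ι ℂ) : ℝ :=
  ((ρ * matLog ρ).trace - (ρ * matLog σ).trace).re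

/-- The `k`-fold tensor power of a matrix on `ℂ^d`, as a matrix on `(ℂ^d)^{⊗k}`
indexed by functions `Fin k → Fin d`. -/
noncomputable def powMat {d : ℕ} (ρ : Matrix (Fin d) (Fin d) ℂ) (k : ℕ) :
    Matrix (Fin k → Fin d) (Fin k → Fin d) ℂ := fun x y => ∏ i, ρ (x i) (y i)

open Filter Topology

/-- A matrix intertwining two diagonal matrices intertwines their images under any function. -/
theorem diagonal_mul_eq_mul_diagonal_map {ι : Type*} [Fintype ι] [DecidableEq ι]
    {a b : ι → ℝ} {Q : Matrix ι ι ℂ}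
    (h : diagonal (fun i => (a i : ℂ)) * Q = Q * diagonal (fun i => (b i : ℂ))) (f : ℝ → ℝ) :
    diagonal (fun i => (f (a i) : ℂ)) * Q = Q * diagonal (fun i => (f (b i) : ℂ)) := by
  ext i j
  have hij := congrFun (congrFun h i) j
  simp only [diagonal_mul, mul_diagonal] at hij ⊢
  by_cases hQ : Q i j = 0
  · simp [hQ]
  · rw [mul_comm (Q i j)] at hij ⊢
    have : a i = b j := by exact_mod_cast mul_right_cancel₀ hQ hij
    rw [this]

theorem isHermitian_conj_diagonal {ι : Type*} [Fintype ι] [DecidableEq ι]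
    (U : Matrix ι ι ℂ) (a : ι → ℝ) :
    (U * diagonal (fun i => (a i : ℂ)) * Uᴴ).IsHermitian := by
  have : (diagonal (fun i => (a i : ℂ)))ᴴ = diagonal (fun i => (a i : ℂ)) := by
    rw [diagonal_conjTranspose]
    congr 1
    ext i
    simp
  simp [IsHermitian, conjTranspose_mul, this, Matrix.mul_assoc]

theorem Matrix.IsHermitian.exists_unitary_diagonal {ι : Type*} [Fintype ι] [DecidableEq ι]
    {A : Matrix ι ι ℂ} (hA : A.IsHermitian) :
    ∃ V : Matrix ι ι ℂ, Vᴴ * V = 1 ∧ V * Vᴴ = 1 ∧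
      A = V * diagonal (fun i => (hA.eigenvalues i : ℂ)) * Vᴴ ∧
      matLog A = V * diagonal (fun i => (Real.log (hA.eigenvalues i) : ℂ)) * Vᴴ := by
  refine ⟨hA.eigenvectorUnitary, ?_, ?_, ?_, ?_⟩
  · exact Unitary.coe_star_mul_self hA.eigenvectorUnitary
  · exact Unitary.coe_mul_star_self hA.eigenvectorUnitary
  · exact hA.spectral_theorem
  · rw [matLog, dif_pos hA]

theorem matLog_unitary_conj_diagonal {ι : Type*} [Fintype ι] [DecidableEq ι]
    {U : Matrix ι ι ℂ} (hU : Uᴴ * U = 1) (hU' : U * Uᴴ = 1) (a : ι → ℝ) :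
    matLog (U * diagonal (fun i => (a i : ℂ)) * Uᴴ)
      = U * diagonal (fun i => (Real.log (a i) : ℂ)) * Uᴴ := by
  have hA := isHermitian_conj_diagonal U a
  obtain ⟨V, hV, hV', hspec, hlog⟩ := hA.exists_unitary_diagonal
  generalize hA.eigenvalues = e at *
  rw [hlog]
  have h : diagonal (fun i => (e i : ℂ)) * (Vᴴ * U)
      = (Vᴴ * U) * diagonal (fun i => (a i : ℂ)) := by
    have := congrArg (fun X => Vᴴ * X * U) hspec
    simp only [Matrix.mul_assoc, hU, Matrix.mul_one] at this
    rw [← Matrix.mul_assoc Vᴴ V, hV, Matrix.one_mul] at this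
    exact this.symm.trans (Matrix.mul_assoc _ _ _).symm
  have h' := diagonal_mul_eq_mul_diagonal_map h Real.log
  calc V * diagonal (fun i => (Real.log (e i) : ℂ)) * Vᴴ
      = V * (diagonal (fun i => (Real.log (e i) : ℂ)) * (Vᴴ * U)) * Uᴴ := by
        simp only [Matrix.mul_assoc, hU', Matrix.mul_one]
    _ = (V * Vᴴ) * U * diagonal (fun i => (Real.log (a i) : ℂ)) * Uᴴ := by
        rw [h']; simp only [Matrix.mul_assoc]
    _ = _ := by rw [hV', Matrix.one_mul]

theorem Commute.matLog_right {ι : Type*} [Fintype ι] [DecidableEq ι]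
    {A B : Matrix ι ι ℂ} (hA : A.IsHermitian) (h : Commute B A) : Commute B (matLog A) := by
  obtain ⟨V, hV, hV', hspec, hlog⟩ := hA.exists_unitary_diagonal
  have key : diagonal (fun i => (hA.eigenvalues i : ℂ)) * (Vᴴ * B * V)
      = (Vᴴ * B * V) * diagonal (fun i => (hA.eigenvalues i : ℂ)) := by
    have h1 : Vᴴ * (B * A) * V = Vᴴ * (A * B) * V := by rw [h.eq]
    generalize diagonal (fun i => (hA.eigenvalues i : ℂ)) = D at *
    have e1 : A * V = V * D := by
      rw [hspec, Matrix.mul_assoc, hV, Matrix.mul_one]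
    have e2 : Vᴴ * A = D * Vᴴ := by
      rw [hspec, ← Matrix.mul_assoc, ← Matrix.mul_assoc, hV, Matrix.one_mul]
    calc D * (Vᴴ * B * V) = (D * Vᴴ) * B * V := by simp only [Matrix.mul_assoc]
      _ = Vᴴ * (A * B) * V := by rw [← e2]; simp only [Matrix.mul_assoc]
      _ = Vᴴ * B * (A * V) := by rw [← h1]; simp only [Matrix.mul_assoc]
      _ = _ := by rw [e1]; simp only [Matrix.mul_assoc]
  have key' := diagonal_mul_eq_mul_diagonal_map key Real.log
  rw [hlog]
  generalize diagonal (fun i => (Real.log (hA.eigenvalues i) : ℂ)) = L at *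
  change B * (V * L * Vᴴ) = (V * L * Vᴴ) * B
  calc B * (V * L * Vᴴ) = (V * Vᴴ) * B * (V * L * Vᴴ) := by rw [hV', Matrix.one_mul]
    _ = V * (Vᴴ * B * V * L) * Vᴴ := by simp only [Matrix.mul_assoc]
    _ = V * (L * (Vᴴ * B * V)) * Vᴴ := by rw [← key']
    _ = (V * L * Vᴴ) * B * (V * Vᴴ) := by simp only [Matrix.mul_assoc]
    _ = _ := by rw [hV', Matrix.mul_one]

theorem trace_unitary_conj_diagonal_mul {ι : Type*} [Fintype ι] [DecidableEq ι]
    (U V : Matrix ι ι ℂ) (a b : ι → ℝ) :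
    (U * diagonal (fun i => (a i : ℂ)) * Uᴴ *
        (V * diagonal (fun i => (b i : ℂ)) * Vᴴ)).trace
      = ((∑ i, ∑ j, ‖(Uᴴ * V) i j‖ ^ 2 * (a i * b j) : ℝ) : ℂ) := by
  have h : (U * diagonal (fun i => (a i : ℂ)) * Uᴴ *
        (V * diagonal (fun i => (b i : ℂ)) * Vᴴ)).trace
      = (diagonal (fun i => (a i : ℂ)) *
          ((Uᴴ * V) * diagonal (fun i => (b i : ℂ)) * (Uᴴ * V)ᴴ)).trace := by
    rw [Matrix.mul_assoc, Matrix.mul_assoc, trace_mul_comm]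
    simp only [conjTranspose_mul, conjTranspose_conjTranspose, Matrix.mul_assoc]
  rw [h]
  simp only [trace, diag_apply, diagonal_mul]
  push_cast
  refine Finset.sum_congr rfl fun i _ => ?_
  rw [Matrix.mul_apply, Finset.mul_sum]
  refine Finset.sum_congr rfl fun j _ => ?_
  rw [mul_diagonal, conjTranspose_apply, ← Complex.mul_conj']
  simp only [RCLike.star_def]
  ring

/-- Rows of a unitary matrix have unit norm. -/
theorem sum_norm_sq_row {ι : Type*} [Fintype ι] [DecidableEq ι] {Q : Matrix ι ι ℂ}
    (hQ : Q * Qᴴ = 1) (i : ι) : ∑ j, ‖Q i j‖ ^ 2 = 1 := by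
  have h := congrFun (congrFun hQ i) i
  simp only [Matrix.mul_apply, conjTranspose_apply, RCLike.star_def, Complex.mul_conj',
    one_apply_eq] at h
  exact_mod_cast h

/-- Columns of a unitary matrix have unit norm. -/
theorem sum_norm_sq_col {ι : Type*} [Fintype ι] [DecidableEq ι] {Q : Matrix ι ι ℂ}
    (hQ : Qᴴ * Q = 1) (j : ι) : ∑ i, ‖Q i j‖ ^ 2 = 1 := by
  have h := sum_norm_sq_row (Q := Qᴴ) (by rwa [conjTranspose_conjTranspose]) j
  simpa [conjTranspose_apply] using h

theorem conjTranspose_mul_unitary {ι : Type*} [Fintype ι] [DecidableEq ι]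
    {U V : Matrix ι ι ℂ} (hU : U * Uᴴ = 1) (hV : Vᴴ * V = 1) :
    (Uᴴ * V)ᴴ * (Uᴴ * V) = 1 := by
  rw [conjTranspose_mul, conjTranspose_conjTranspose, Matrix.mul_assoc, ← Matrix.mul_assoc U,
    hU, Matrix.one_mul, hV]

theorem relEnt_unitary_conj_diagonal {ι : Type*} [Fintype ι] [DecidableEq ι]
    {U V : Matrix ι ι ℂ} (hU : Uᴴ * U = 1) (hU' : U * Uᴴ = 1)
    (hV : Vᴴ * V = 1) (hV' : V * Vᴴ = 1) (p q : ι → ℝ) :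
    relEnt (U * diagonal (fun i => (p i : ℂ)) * Uᴴ) (V * diagonal (fun i => (q i : ℂ)) * Vᴴ)
      = ∑ i, ∑ j, ‖(Uᴴ * V) i j‖ ^ 2 * p i * (Real.log (p i) - Real.log (q j)) := by
  have hQ : (Uᴴ * V) * (Uᴴ * V)ᴴ = 1 :=
    mul_eq_one_comm.mp (conjTranspose_mul_unitary hU' hV)
  rw [relEnt, matLog_unitary_conj_diagonal hU hU', matLog_unitary_conj_diagonal hV hV',
    trace_unitary_conj_diagonal_mul, trace_unitary_conj_diagonal_mul, ← Complex.ofReal_sub,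
    Complex.ofReal_re, hU, ← Finset.sum_sub_distrib]
  refine Finset.sum_congr rfl fun i _ => ?_
  have h1 : ∑ j, ‖(1 : Matrix ι ι ℂ) i j‖ ^ 2 * (p i * Real.log (p j))
      = p i * Real.log (p i) := by
    rw [Finset.sum_eq_single i]
    · simp
    · intro j _ hj
      simp [one_apply_ne hj.symm]
    · simp
  rw [h1]
  calc p i * Real.log (p i) - ∑ j, ‖(Uᴴ * V) i j‖ ^ 2 * (p i * Real.log (q j))
      = (∑ j, ‖(Uᴴ * V) i j‖ ^ 2) * (p i * Real.log (p i))
        - ∑ j, ‖(Uᴴ * V) i j‖ ^ 2 * (p i * Real.log (q j)) := by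
        rw [sum_norm_sq_row hQ, one_mul]
    _ = _ := by
        rw [Finset.sum_mul, ← Finset.sum_sub_distrib]
        exact Finset.sum_congr rfl fun j _ => by ring

theorem dotProduct_unitary_conj_diagonal {ι : Type*} [Fintype ι] [DecidableEq ι]
    (U : Matrix ι ι ℂ) (a : ι → ℝ) (v : ι → ℂ) :
    star v ⬝ᵥ ((U * diagonal (fun i => (a i : ℂ)) * Uᴴ) *ᵥ v)
      = ((∑ i, a i * ‖(Uᴴ *ᵥ v) i‖ ^ 2 : ℝ) : ℂ) := by
  rw [← mulVec_mulVec, ← mulVec_mulVec, dotProduct_mulVec]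
  have : star v ᵥ* U = star (Uᴴ *ᵥ v) := by
    rw [star_mulVec, conjTranspose_conjTranspose]
  rw [this]
  simp only [dotProduct, mulVec_diagonal, Pi.star_apply]
  push_cast
  refine Finset.sum_congr rfl fun i _ => ?_
  rw [← Complex.conj_mul', RCLike.star_def]
  ring

/-- Classical form of Klein's inequality and of `D ≤ D_max`. -/
theorem sum_log_sub_log_mem_Icc {ι : Type*} [Fintype ι] [DecidableEq ι]
    {Q : Matrix ι ι ℂ} (hQ : Qᴴ * Q = 1) {p q : ι → ℝ}
    (hp : ∀ i, 0 ≤ p i) (hq : ∀ j, 0 ≤ q j) (hp1 : ∑ i, p i = 1) (hq1 : ∑ j, q j = 1)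
    {J : ℝ} (hJ : 0 < J)
    (hle : ∀ y : ι → ℂ, ∑ i, p i * ‖(Q *ᵥ y) i‖ ^ 2 ≤ J * ∑ j, q j * ‖y j‖ ^ 2) :
    ∑ i, ∑ j, ‖Q i j‖ ^ 2 * p i * (Real.log (p i) - Real.log (q j))
      ∈ Set.Icc 0 (Real.log J) := by
  have hrow := sum_norm_sq_row (mul_eq_one_comm.mp hQ)
  have hcol := sum_norm_sq_col hQ
  have hsupp : ∀ i j, q j = 0 → ‖Q i j‖ ^ 2 * p i = 0 := by
    intro i j hj
    have h := hle (Pi.single j 1)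
    have hr : ∑ l, q l * ‖(Pi.single j 1 : ι → ℂ) l‖ ^ 2 = 0 := by
      refine Finset.sum_eq_zero fun l _ => ?_
      by_cases hl : l = j
      · simp [hl, hj]
      · simp [Pi.single_eq_of_ne hl]
    rw [hr, mul_zero] at h
    have h0 : ∀ l ∈ Finset.univ, 0 ≤ p l * ‖(Q *ᵥ Pi.single j 1) l‖ ^ 2 :=
      fun l _ => mul_nonneg (hp l) (sq_nonneg _)
    have := (Finset.sum_eq_zero_iff_of_nonneg h0).mp (le_antisymm h (Finset.sum_nonneg h0)) i
      (Finset.mem_univ i)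
    simpa [mul_comm] using this
  constructor
  · have hbase : ∑ i, ∑ j, ‖Q i j‖ ^ 2 * (p i - q j) = 0 := by
      simp only [mul_sub, Finset.sum_sub_distrib]
      rw [Finset.sum_comm (f := fun i j => ‖Q i j‖ ^ 2 * q j)]
      simp only [← Finset.sum_mul, hrow, hcol, one_mul, hp1, hq1, sub_self]
    rw [← hbase]
    refine Finset.sum_le_sum fun i _ => Finset.sum_le_sum fun j _ => ?_
    rcases (hp i).eq_or_lt with hpi | hpi
    · rw [← hpi]
      have := mul_nonneg (sq_nonneg ‖Q i j‖) (hq j)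
      linarith
    rcases (hq j).eq_or_lt with hqj | hqj
    · have := hsupp i j hqj.symm
      rw [this, ← hqj, sub_zero, this, zero_mul]
    · rw [mul_assoc]
      refine mul_le_mul_of_nonneg_left ?_ (sq_nonneg _)
      have h := Real.log_le_sub_one_of_pos (div_pos hqj hpi)
      rw [Real.log_div hqj.ne' hpi.ne'] at h
      have h2 := mul_le_mul_of_nonneg_left h hpi.le
      have h3 : p i * (q j / p i - 1) = q j - p i := by field_simp
      linarith
  · have hgoal : ∀ i, ∑ j, ‖Q i j‖ ^ 2 * p i * (Real.log (p i) - Real.log (q j))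
        ≤ p i * Real.log J := by
      intro i
      rcases (hp i).eq_or_lt with hpi | hpi
      · simp [← hpi]
      set s := ∑ j, ‖Q i j‖ ^ 2 / q j with hs
      have hs0 : 0 ≤ s := Finset.sum_nonneg fun j _ => div_nonneg (sq_nonneg _) (hq j)
      have hps : p i * s ≤ J := by
        have h := hle fun j => star (Q i j) / (q j : ℂ)
        have hr : ∑ j, q j * ‖star (Q i j) / (q j : ℂ)‖ ^ 2 = s := by
          refine Finset.sum_congr rfl fun j _ => ?_
          rw [norm_div, norm_star, Complex.norm_real, Real.norm_eq_abs, div_pow, sq_abs]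
          rcases (hq j).eq_or_lt with hqj | hqj
          · simp [← hqj]
          · field_simp
        have hl : (Q *ᵥ fun j => star (Q i j) / (q j : ℂ)) i = (s : ℂ) := by
          simp only [mulVec, dotProduct, hs]
          push_cast
          refine Finset.sum_congr rfl fun j _ => ?_
          rw [← Complex.mul_conj', RCLike.star_def]
          ring
        have hterm := Finset.single_le_sum
          (f := fun l => p l * ‖(Q *ᵥ fun j => star (Q i j) / (q j : ℂ)) l‖ ^ 2)
          (fun l _ => mul_nonneg (hp l) (sq_nonneg _)) (Finset.mem_univ i)
        rw [hr] at h
        simp only [hl, Complex.norm_real, Real.norm_eq_abs, sq_abs] at hterm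
        rcases hs0.eq_or_lt with h0 | h0
        · rw [← h0, mul_zero]; exact hJ.le
        · refine le_of_mul_le_mul_right ?_ h0
          calc p i * s * s = p i * s ^ 2 := by ring
            _ ≤ J * s := hterm.trans h
      have hbound : ∀ j, ‖Q i j‖ ^ 2 * p i * (Real.log (p i) - Real.log (q j))
          ≤ p i * (‖Q i j‖ ^ 2 * (Real.log J - 1) + p i / J * (‖Q i j‖ ^ 2 / q j)) := by
        intro j
        rcases (hq j).eq_or_lt with hqj | hqj
        · have h0 := hsupp i j hqj.symm
          have hw : ‖Q i j‖ ^ 2 = 0 := (mul_eq_zero.mp h0).resolve_right hpi.ne'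
          rw [hw]
          simp
        · have h := Real.log_le_sub_one_of_pos (div_pos hpi (mul_pos hJ hqj))
          rw [Real.log_div hpi.ne' (mul_pos hJ hqj).ne', Real.log_mul hJ.ne' hqj.ne'] at h
          have h2 := mul_le_mul_of_nonneg_left h
            (mul_nonneg (sq_nonneg ‖Q i j‖) hpi.le)
          have h3 : p i / J * (‖Q i j‖ ^ 2 / q j) = ‖Q i j‖ ^ 2 * (p i / (J * q j)) := by
            field_simp
          rw [h3]
          nlinarith
      refine (Finset.sum_le_sum fun j _ => hbound j).trans ?_
      rw [← Finset.mul_sum, Finset.sum_add_distrib, ← Finset.sum_mul, ← Finset.mul_sum, hrow,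
        ← hs, one_mul]
      refine mul_le_mul_of_nonneg_left ?_ hpi.le
      have : p i / J * s ≤ 1 := by
        rw [div_mul_eq_mul_div, div_le_one hJ]; exact hps
      linarith
    refine (Finset.sum_le_sum fun i _ => hgoal i).trans ?_
    rw [← Finset.sum_mul, hp1, one_mul]

theorem sum_eigenvalues_eq_one {ι : Type*} [Fintype ι] [DecidableEq ι]
    {A : Matrix ι ι ℂ} (hA : A.IsHermitian) (h1 : A.trace = 1) :
    ∑ i, hA.eigenvalues i = 1 := by
  have := hA.trace_eq_sum_eigenvalues
  rw [h1] at this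
  refine Complex.ofReal_injective ?_
  rw [Complex.ofReal_sum, Complex.ofReal_one]
  exact this.symm

/-- If `ρ ≤ J • σ` for two density matrices, then `0 ≤ D(ρ‖σ) ≤ log J`. -/
theorem relEnt_mem_Icc_of_le {ι : Type*} [Fintype ι] [DecidableEq ι]
    {ρ σ : Matrix ι ι ℂ} (hρ : ρ.PosSemidef) (hσ : σ.PosSemidef)
    (hρ1 : ρ.trace = 1) (hσ1 : σ.trace = 1) {J : ℝ} (hJ : 0 < J)
    (hle : ∀ v : ι → ℂ, (star v ⬝ᵥ (ρ *ᵥ v)).re ≤ J * (star v ⬝ᵥ (σ *ᵥ v)).re) :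
    relEnt ρ σ ∈ Set.Icc 0 (Real.log J) := by
  obtain ⟨U, hU, hU', hρs, -⟩ := hρ.isHermitian.exists_unitary_diagonal
  obtain ⟨V, hV, hV', hσs, -⟩ := hσ.isHermitian.exists_unitary_diagonal
  have hp := hρ.eigenvalues_nonneg
  have hq := hσ.eigenvalues_nonneg
  have hp1 := sum_eigenvalues_eq_one hρ.isHermitian hρ1
  have hq1 := sum_eigenvalues_eq_one hσ.isHermitian hσ1
  generalize hρ.isHermitian.eigenvalues = p at *
  generalize hσ.isHermitian.eigenvalues = q at *
  rw [hρs, hσs, relEnt_unitary_conj_diagonal hU hU' hV hV']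
  refine sum_log_sub_log_mem_Icc (conjTranspose_mul_unitary hU' hV) hp hq hp1 hq1 hJ fun y => ?_
  have h := hle (V *ᵥ y)
  rw [hρs, hσs, dotProduct_unitary_conj_diagonal, dotProduct_unitary_conj_diagonal,
    Complex.ofReal_re, Complex.ofReal_re, mulVec_mulVec, mulVec_mulVec, hV, one_mulVec] at h
  exact h

theorem posSemidef_pinching {ι κ : Type*} [Fintype ι] [Fintype κ]
    {P : κ → Matrix ι ι ℂ} (hherm : ∀ j, (P j)ᴴ = P j) {A : Matrix ι ι ℂ}
    (hA : A.PosSemidef) : (∑ j, P j * A * P j).PosSemidef := by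
  refine posSemidef_sum _ fun j _ => ?_
  have := hA.mul_mul_conjTranspose_same (P j)
  rwa [hherm j] at this

section Pinching

variable {ι κ : Type*} [Fintype ι] [DecidableEq ι] [Fintype κ] {P : κ → Matrix ι ι ℂ}

theorem commute_pinching (hidem : ∀ j, P j * P j = P j)
    (horth : ∀ j j', j ≠ j' → P j * P j' = 0) (A : Matrix ι ι ℂ) (j : κ) :
    Commute (P j) (∑ i, P i * A * P i) := by
  classical
  have hl : P j * ∑ i, P i * A * P i = P j * A * P j := by
    rw [Finset.mul_sum, Finset.sum_eq_single j]
    · rw [← Matrix.mul_assoc, ← Matrix.mul_assoc, hidem]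
    · intro i _ hi
      rw [← Matrix.mul_assoc, ← Matrix.mul_assoc, horth j i hi.symm]
      simp
    · simp
  have hr : (∑ i, P i * A * P i) * P j = P j * A * P j := by
    rw [Finset.sum_mul, Finset.sum_eq_single j]
    · rw [Matrix.mul_assoc, hidem]
    · intro i _ hi
      rw [Matrix.mul_assoc, horth i j hi, Matrix.mul_zero]
    · simp
  exact hl.trans hr.symm

theorem trace_pinching_mul (hidem : ∀ j, P j * P j = P j) (hsum : ∑ j, P j = 1)
    (A : Matrix ι ι ℂ) {L : Matrix ι ι ℂ} (hL : ∀ j, Commute (P j) L) :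
    ((∑ j, P j * A * P j) * L).trace = (A * L).trace := by
  have h : ∀ j, (P j * A * P j * L).trace = (A * L * P j).trace := by
    intro j
    rw [Matrix.mul_assoc, (hL j).eq, Matrix.mul_assoc, trace_mul_comm]
    simp only [Matrix.mul_assoc, hidem]
  rw [Finset.sum_mul, trace_sum]
  simp only [h]
  rw [← trace_sum, ← Finset.mul_sum, hsum, Matrix.mul_one]

/-- The pinching inequality `A ≤ |κ| • ∑ j, P j * A * P j`. -/
theorem le_card_mul_pinching (hherm : ∀ j, (P j)ᴴ = P j) (hsum : ∑ j, P j = 1)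
    {A : Matrix ι ι ℂ} (hA : A.PosSemidef) (v : ι → ℂ) :
    (star v ⬝ᵥ (A *ᵥ v)).re
      ≤ Fintype.card κ * (star v ⬝ᵥ ((∑ j, P j * A * P j) *ᵥ v)).re := by
  obtain ⟨U, hU, hU', hAs, -⟩ := hA.isHermitian.exists_unitary_diagonal
  have hp := hA.eigenvalues_nonneg
  generalize hA.isHermitian.eigenvalues = p at *
  have hr : star v ⬝ᵥ ((∑ j, P j * A * P j) *ᵥ v)
      = ∑ j, star (P j *ᵥ v) ⬝ᵥ (A *ᵥ (P j *ᵥ v)) := by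
    rw [sum_mulVec, dotProduct_sum]
    refine Finset.sum_congr rfl fun j _ => ?_
    rw [← mulVec_mulVec, ← mulVec_mulVec, dotProduct_mulVec, star_mulVec, hherm]
  have hv : ∀ i, (Uᴴ *ᵥ v) i = ∑ j, (Uᴴ *ᵥ (P j *ᵥ v)) i := by
    intro i
    rw [← Finset.sum_apply, ← mulVec_sum, ← sum_mulVec, hsum, one_mulVec]
  rw [hr, hAs]
  simp only [dotProduct_unitary_conj_diagonal, Complex.re_sum, Complex.ofReal_re]
  rw [Finset.sum_comm, Finset.mul_sum]
  refine Finset.sum_le_sum fun i _ => ?_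
  rw [← Finset.mul_sum, mul_left_comm]
  refine mul_le_mul_of_nonneg_left ?_ (hp i)
  rw [hv i]
  calc ‖∑ j, (Uᴴ *ᵥ (P j *ᵥ v)) i‖ ^ 2 ≤ (∑ j, ‖(Uᴴ *ᵥ (P j *ᵥ v)) i‖) ^ 2 := by
        gcongr
        exact norm_sum_le _ _
    _ ≤ _ := by
        simpa using sq_sum_le_card_mul_sum_sq (s := Finset.univ)
          (f := fun j => ‖(Uᴴ *ᵥ (P j *ᵥ v)) i‖)

/-- A pinching by `|κ|` projectors that fixes `σ` decreases `D(ρ‖σ)` by at most `log |κ|`. -/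
theorem relEnt_sub_relEnt_pinching_mem_Icc [Nonempty κ]
    (hherm : ∀ j, (P j)ᴴ = P j) (hidem : ∀ j, P j * P j = P j)
    (horth : ∀ j j', j ≠ j' → P j * P j' = 0) (hsum : ∑ j, P j = 1)
    {ρ σ : Matrix ι ι ℂ} (hρ : ρ.PosSemidef) (hρ1 : ρ.trace = 1) (hσ : σ.IsHermitian)
    (hfix : ∑ j, P j * σ * P j = σ) :
    relEnt ρ σ - relEnt (∑ j, P j * ρ * P j) σ ∈ Set.Icc 0 (Real.log (Fintype.card κ)) := by
  have hR := posSemidef_pinching hherm hρ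
  have hR1 : (∑ j, P j * ρ * P j).trace = 1 := by
    have := trace_pinching_mul hidem hsum ρ (L := 1) fun j => Commute.one_right _
    rwa [Matrix.mul_one, Matrix.mul_one, hρ1] at this
  have h := relEnt_mem_Icc_of_le hρ hR hρ1 hR1
    (by exact_mod_cast Fintype.card_pos (α := κ)) (le_card_mul_pinching hherm hsum hρ)
  have hσc : ∀ j, Commute (P j) σ := fun j => hfix ▸ commute_pinching hidem horth σ j
  have e1 := trace_pinching_mul hidem hsum ρ fun j => (hσc j).matLog_right hσ
  have e2 := trace_pinching_mul hidem hsum ρ fun j =>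
    (commute_pinching hidem horth ρ j).matLog_right hR.isHermitian
  convert h using 1
  simp only [relEnt, e1, e2, Complex.sub_re]
  ring

end Pinching

theorem sum_prod_mul_sum {α : Type*} [Fintype α] (k : ℕ) {M : α → ℝ} (hM : ∑ a, M a = 1)
    (g : α → ℝ) :
    ∑ z : Fin k → α, (∏ i, M (z i)) * ∑ i, g (z i) = k * ∑ a, M a * g a := by
  simp only [Finset.mul_sum]
  rw [Finset.sum_comm]
  have h : ∀ i : Fin k, ∑ z : Fin k → α, (∏ l, M (z l)) * g (z i) = ∑ a, M a * g a := by
    intro i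
    have e : ∀ z : Fin k → α, (∏ l, M (z l)) * g (z i)
        = ∏ l, (M (z l) * if l = i then g (z l) else 1) := by
      intro z
      rw [Finset.prod_mul_distrib, Finset.prod_ite_eq' Finset.univ i]
      simp
    simp only [e]
    rw [← Fintype.prod_sum (fun l a => M a * if l = i then g a else 1),
      Finset.prod_eq_single i]
    · simp
    · intro l _ hl
      simp [hl, hM]
    · simp
  simp [h, Finset.mul_sum]

section PowMat

variable {d : ℕ}

theorem powMat_mul (A B : Matrix (Fin d) (Fin d) ℂ) (k : ℕ) :
    powMat (A * B) k = powMat A k * powMat B k := by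
  ext x y
  simp only [powMat, Matrix.mul_apply, ← Finset.prod_mul_distrib]
  rw [Fintype.prod_sum (fun i a => A (x i) a * B a (y i))]

theorem powMat_conjTranspose (A : Matrix (Fin d) (Fin d) ℂ) (k : ℕ) :
    powMat Aᴴ k = (powMat A k)ᴴ := by
  ext x y
  simp [powMat, conjTranspose_apply]

theorem powMat_diagonal (a : Fin d → ℂ) (k : ℕ) :
    powMat (diagonal a) k = diagonal fun x => ∏ i, a (x i) := by
  ext x y
  by_cases h : x = y
  · simp [h, powMat]
  · obtain ⟨i, hi⟩ := Function.ne_iff.mp h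
    rw [diagonal_apply_ne _ h]
    exact Finset.prod_eq_zero (Finset.mem_univ i) (diagonal_apply_ne _ hi)

theorem powMat_one (k : ℕ) : powMat (1 : Matrix (Fin d) (Fin d) ℂ) k = 1 := by
  rw [← diagonal_one, powMat_diagonal]
  simp

theorem powMat_trace (A : Matrix (Fin d) (Fin d) ℂ) (k : ℕ) :
    (powMat A k).trace = A.trace ^ k := by
  simp only [trace, diag_apply, powMat]
  rw [← Fintype.prod_sum (fun _ a => A a a)]
  simp

theorem powMat_unitary_conj_diagonal (U : Matrix (Fin d) (Fin d) ℂ) (a : Fin d → ℝ) (k : ℕ) :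
    powMat (U * diagonal (fun i => (a i : ℂ)) * Uᴴ) k
      = powMat U k * diagonal (fun x => ((∏ i, a (x i) : ℝ) : ℂ)) * (powMat U k)ᴴ := by
  rw [powMat_mul, powMat_mul, powMat_diagonal, powMat_conjTranspose]
  push_cast
  rfl

theorem powMat_unitary {U : Matrix (Fin d) (Fin d) ℂ} (hU : Uᴴ * U = 1) (k : ℕ) :
    (powMat U k)ᴴ * powMat U k = 1 := by
  rw [← powMat_conjTranspose, ← powMat_mul, hU, powMat_one]

theorem posSemidef_powMat {A : Matrix (Fin d) (Fin d) ℂ} (hA : A.PosSemidef) (k : ℕ) :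
    (powMat A k).PosSemidef := by
  obtain ⟨U, -, -, hAs, -⟩ := hA.isHermitian.exists_unitary_diagonal
  have hp := hA.eigenvalues_nonneg
  rw [hAs, powMat_unitary_conj_diagonal]
  refine PosSemidef.mul_mul_conjTranspose_same (posSemidef_diagonal_iff.mpr fun x => ?_) _
  exact_mod_cast Finset.prod_nonneg fun i _ => hp (x i)

/-- Additivity of the relative entropy on tensor powers. -/
theorem relEnt_powMat {ρ τ : Matrix (Fin d) (Fin d) ℂ} (hρ : ρ.PosSemidef)
    (hρ1 : ρ.trace = 1) (hτ : τ.PosDef) (k : ℕ) :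
    relEnt (powMat ρ k) (powMat τ k) = k * relEnt ρ τ := by
  obtain ⟨U, hU, hU', hρs, -⟩ := hρ.isHermitian.exists_unitary_diagonal
  obtain ⟨V, hV, hV', hτs, -⟩ := hτ.isHermitian.exists_unitary_diagonal
  have hp1 := sum_eigenvalues_eq_one hρ.isHermitian hρ1
  have hq := hτ.eigenvalues_pos
  generalize hρ.isHermitian.eigenvalues = p at *
  generalize hτ.isHermitian.eigenvalues = q at *
  rw [hρs, hτs, powMat_unitary_conj_diagonal, powMat_unitary_conj_diagonal,
    relEnt_unitary_conj_diagonal hU hU' hV hV',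
    relEnt_unitary_conj_diagonal (powMat_unitary hU k) (mul_eq_one_comm.mp (powMat_unitary hU k))
      (powMat_unitary hV k) (mul_eq_one_comm.mp (powMat_unitary hV k)),
    ← powMat_conjTranspose, ← powMat_mul]
  have hQ : (Uᴴ * V) * (Uᴴ * V)ᴴ = 1 :=
    mul_eq_one_comm.mp (conjTranspose_mul_unitary hU' hV)
  generalize Uᴴ * V = Q at *
  have hM : ∑ a : Fin d × Fin d, ‖Q a.1 a.2‖ ^ 2 * p a.1 = 1 := by
    rw [Fintype.sum_prod_type]
    simp only [← Finset.sum_mul, sum_norm_sq_row hQ, one_mul, hp1]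
  have key := sum_prod_mul_sum k hM fun a => Real.log (p a.1) - Real.log (q a.2)
  rw [Fintype.sum_prod_type] at key
  rw [← key, ← (Equiv.arrowProdEquivProdArrow (Fin k) (fun _ => Fin d)
    (fun _ => Fin d)).symm.sum_comp, Fintype.sum_prod_type]
  refine Finset.sum_congr rfl fun x _ => Finset.sum_congr rfl fun y _ => ?_
  have hprod : ‖powMat Q k x y‖ ^ 2 * ∏ i, p (x i) = ∏ i, ‖Q (x i) (y i)‖ ^ 2 * p (x i) := by
    rw [powMat, norm_prod, Finset.prod_mul_distrib, Finset.prod_pow]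
  rw [hprod]
  change _ = (∏ i, ‖Q (x i) (y i)‖ ^ 2 * p (x i)) *
    ∑ i, (Real.log (p (x i)) - Real.log (q (y i)))
  by_cases h0 : ∀ i, p (x i) ≠ 0
  · rw [Real.log_prod fun i _ => h0 i, Real.log_prod fun i _ => (hq (y i)).ne',
      Finset.sum_sub_distrib]
  · push Not at h0
    obtain ⟨i, hi⟩ := h0
    rw [Finset.prod_eq_zero (Finset.mem_univ i) (by rw [hi, mul_zero]), zero_mul, zero_mul]

end PowMat

theorem tendsto_inv_mul_log_add_one (c : ℝ) :
    Tendsto (fun k : ℕ => (k : ℝ)⁻¹ * (c * Real.log ((k : ℝ) + 1))) atTop (𝓝 0) := by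
  have h1 : Tendsto (fun x : ℝ => Real.log x / (1 * x + (-1))) atTop (𝓝 0) := by
    simpa using Real.tendsto_pow_log_div_mul_add_atTop 1 (-1) 1 one_ne_zero
  have h2 : Tendsto (fun k : ℕ => (k : ℝ) + 1) atTop atTop :=
    tendsto_atTop_add_const_right _ _ tendsto_natCast_atTop_atTop
  have h3 := (h1.comp h2).const_mul c
  rw [mul_zero] at h3
  refine h3.congr fun k => ?_
  simp only [Function.comp_apply, one_mul, add_neg_cancel_right]
  ring

/-- If `τ` is a full-rank density matrix and, for each `k`, `Pk` is a pinching
channel on the `k`-fold tensor power fixing `τ^{⊗k}` and using at most `(k+1)^c` projectors,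
then `limsup_k (1/k) D(Pk(ρ^{⊗k}) ‖ τ^{⊗k}) = D(ρ‖τ)` for every density matrix `ρ` with
`supp ρ ⊆ supp τ`. -/
theorem limsup_pinched_relEnt_eq
    {d : ℕ} (ρ τ : Matrix (Fin d) (Fin d) ℂ)
    (hρ : ρ.PosSemidef) (hρ1 : ρ.trace = 1)
    (hτ : τ.PosDef) (hτ1 : τ.trace = 1)
    (hsupp : ∀ v, τ.mulVec v = 0 → ρ.mulVec v = 0)
    (c : ℝ) (J : ℕ → ℕ) (hJpos : ∀ k, 0 < J k)
    (hJle : ∀ k, (J k : ℝ) ≤ ((k : ℝ) + 1) ^ c)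
    (P : ∀ k, Fin (J k) → Matrix (Fin k → Fin d) (Fin k → Fin d) ℂ)
    (hproj : ∀ k j, (P k j)ᴴ = P k j ∧ P k j * P k j = P k j)
    (horth : ∀ k j j', j ≠ j' → P k j * P k j' = 0)
    (hsum : ∀ k, ∑ j, P k j = 1)
    (hfix : ∀ k, ∑ j, P k j * powMat τ k * P k j = powMat τ k) :
    Filter.atTop.limsup
      (fun k : ℕ => ((k : ℝ))⁻¹ * relEnt (∑ j, P k j * powMat ρ k * P k j) (powMat τ k))
      = relEnt ρ τ := by
  have hbound : ∀ k : ℕ, relEnt (powMat ρ k) (powMat τ k)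
      - relEnt (∑ j, P k j * powMat ρ k * P k j) (powMat τ k)
        ∈ Set.Icc 0 (c * Real.log ((k : ℝ) + 1)) := by
    intro k
    have : Nonempty (Fin (J k)) := ⟨⟨0, hJpos k⟩⟩
    have h := relEnt_sub_relEnt_pinching_mem_Icc (fun j => (hproj k j).1)
      (fun j => (hproj k j).2) (horth k) (hsum k) (posSemidef_powMat hρ k)
      (by rw [powMat_trace, hρ1, one_pow]) (posSemidef_powMat hτ.posSemidef k).isHermitian
      (hfix k)
    rw [Fintype.card_fin] at h
    refine ⟨h.1, h.2.trans ?_⟩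
    rw [← Real.log_rpow (by positivity)]
    exact Real.log_le_log (by exact_mod_cast hJpos k) (hJle k)
  refine Tendsto.limsup_eq ?_
  have hlow : Tendsto (fun k : ℕ => relEnt ρ τ - (k : ℝ)⁻¹ * (c * Real.log ((k : ℝ) + 1)))
      atTop (𝓝 (relEnt ρ τ)) := by
    simpa using tendsto_const_nhds.sub (tendsto_inv_mul_log_add_one c)
  have hscale : ∀ k : ℕ, 0 < k →
      (k : ℝ)⁻¹ * relEnt (powMat ρ k) (powMat τ k) = relEnt ρ τ := by
    intro k hk
    have : (k : ℝ) ≠ 0 := by exact_mod_cast hk.ne'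
    rw [relEnt_powMat hρ hρ1 hτ, inv_mul_cancel_left₀ this]
  refine tendsto_of_tendsto_of_tendsto_of_le_of_le' hlow tendsto_const_nhds ?_ ?_
  · filter_upwards [eventually_gt_atTop 0] with k hk
    rw [← hscale k hk, ← mul_sub]
    exact mul_le_mul_of_nonneg_left (by linarith [(hbound k).2]) (by positivity)
  · filter_upwards [eventually_gt_atTop 0] with k hk
    rw [← hscale k hk]
    exact mul_le_mul_of_nonneg_left (by linarith [(hbound k).1]) (by positivity)
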